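/- Let W be the ℂ-linear span in End_ℂ(S) of {L⁽ʳ⁾(n) : r ∈ ℕ, n ∈ ℤ} ∪ {id_S}, and let 𝒟⁺ ⊆ End_ℂ(ℂ[t,t⁻¹]) be the ℂ-linear span of {Dʳ∘M_{tⁿ}∘D∘Dʳ : r ∈ ℕ, n ∈ ℤ}. Then W is a Lie subalgebra of End_ℂ(S), and there is a surjective ℂ-linear Lie algebra homomorphism π : W → 𝒟⁺ with π(L⁽ʳ⁾(n)) = (−1)^{r+1}·Dʳ∘M_{tⁿ}∘D∘Dʳ for all r ∈ ℕ, n ∈ ℤ and kernel exactly ℂ·id_S; that is, W is a one-dimensional central extension of 𝒟⁺. -/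

import Mathlib

/-!
The projection is the adjoint action of `W` on the Heisenberg operators. The commutator of
`L⁽ʳ⁾(n)` with `h(k)` is `(-1)^(r+1) k^(r+1) (n+k)^r h(n+k)` (`LR_comm`), and the scalar is
precisely the one by which `(-1)^(r+1) Dʳ tⁿ D Dʳ` maps `tᵏ` to `tⁿ⁺ᵏ` (`rho_T`). With
`fock : ℂ[t,t⁻¹] → End S`, `tᵏ ↦ h(k)`, this reads `[w, fock q] = fock (d q)` for every pair
`(w, d)` in the span `graphSpan` of the pairs `(id, 0)` and
`(L⁽ʳ⁾(n), (-1)^(r+1) Dʳ tⁿ D Dʳ)` (`graph_intertwine`). That span is the graph of `π`: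

* If `d = 0`, then `w` commutes with all `h(k)` and is a scalar (`scalar_of_commute`).
* If `w` is a scalar, then `fock (d tᵏ) = 0`, so `d tᵏ ∈ ℂ t⁰` for all `k` (recall `h(0) = 0`).
  The coefficient of `t^(n+k)` in `d tᵏ` is polynomial in `k`, so `d = 0` (`eq_zero_of_coeff`).
* The graph is closed under brackets (`graph_bracket_mem`). The span of the `Dʳ tⁿ D Dʳ`
  consists of the sums of operators `tⁿ p(D) D` with `p` invariant under `X ↦ -n - X`, a
  description stable under brackets (`rho_bracket_mem`); the first components then agree up to
  an operator commuting with all `h(k)`, so no computation of the cocycle is needed.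
-/

noncomputable section

/-- The polynomial algebra `S = ℂ[a₁,a₂,a₃,…]`, with variables indexed by `ℕ+`. -/
abbrev SS : Type := MvPolynomial ℕ+ ℂ

/-- The Heisenberg operators `h(n)` on `S`: for `n < 0`, multiplication by `a₋ₙ`;
for `n > 0`, `n·∂/∂aₙ`; and `h(0) = 0`. -/
noncomputable def hOp (n : ℤ) : Module.End ℂ SS :=
  if _h1 : 0 < n then
    (n : ℂ) • (MvPolynomial.pderiv (R := ℂ) (⟨n.toNat, by omega⟩ : ℕ+)).toLinearMap
  else if _h2 : n < 0 then
    LinearMap.mulLeft ℂ (MvPolynomial.X (⟨(-n).toNat, by omega⟩ : ℕ+))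
  else 0

/-- The normally ordered product `:h(i)h(j):`  (equal to `h(i)∘h(j)` if `i ≤ j`,
and to `h(j)∘h(i)` if `i > j`; note `f * g` is composition in `Module.End`). -/
noncomputable def nord (i j : ℤ) : Module.End ℂ SS :=
  if i ≤ j then hOp i * hOp j else hOp j * hOp i

open LaurentPolynomial (T)

/-! ### The Heisenberg operators and their commutators with `L⁽ʳ⁾(n)` -/

lemma hOp_zero : hOp 0 = 0 := by simp [hOp]

lemma hOp_pos (i : ℕ+) (p : SS) :
    hOp ((i : ℕ) : ℤ) p = ((i : ℕ) : ℂ) • MvPolynomial.pderiv i p := by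
  have h : (0 : ℤ) < ((i : ℕ) : ℤ) := by exact_mod_cast i.pos
  have e : (⟨(((i : ℕ) : ℤ)).toNat, by omega⟩ : ℕ+) = i := by
    apply PNat.eq; simp
  have h1 : hOp ((i : ℕ) : ℤ) = (((i : ℕ) : ℤ) : ℂ) •
      (MvPolynomial.pderiv (R := ℂ)
        (⟨(((i : ℕ) : ℤ)).toNat, by omega⟩ : ℕ+)).toLinearMap := dif_pos h
  rw [h1, Int.cast_natCast]
  exact congrArg (fun j : ℕ+ => ((i : ℕ) : ℂ) • MvPolynomial.pderiv j p) e

lemma hOp_neg (i : ℕ+) (p : SS) :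
    hOp (-((i : ℕ) : ℤ)) p = MvPolynomial.X i * p := by
  have h : (0 : ℤ) < ((i : ℕ) : ℤ) := by exact_mod_cast i.pos
  have e : (⟨(- -((i : ℕ) : ℤ)).toNat, by omega⟩ : ℕ+) = i := by
    apply PNat.eq; simp
  have h1 : hOp (-((i : ℕ) : ℤ)) = LinearMap.mulLeft ℂ
      (MvPolynomial.X (⟨(- -((i : ℕ) : ℤ)).toNat, by omega⟩ : ℕ+) : SS) :=
    (dif_neg (by omega)).trans (dif_pos (by omega))
  rw [h1]
  exact congrArg (fun j : ℕ+ => (MvPolynomial.X j * p : SS)) e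

lemma int_trichotomy (n : ℤ) :
    n = 0 ∨ (∃ i : ℕ+, n = ((i : ℕ) : ℤ)) ∨ ∃ i : ℕ+, n = -((i : ℕ) : ℤ) := by
  rcases lt_trichotomy n 0 with h | h | h
  · exact Or.inr (Or.inr ⟨⟨(-n).toNat, by omega⟩, by simp; omega⟩)
  · exact Or.inl h
  · exact Or.inr (Or.inl ⟨⟨n.toNat, by omega⟩, by simp; omega⟩)

lemma pderiv_pderiv_comm (i j : ℕ+) (p : SS) :
    MvPolynomial.pderiv i (MvPolynomial.pderiv j p)
      = MvPolynomial.pderiv j (MvPolynomial.pderiv i p) := by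
  ext m
  simp only [MvPolynomial.coeff_pderiv, Finsupp.add_apply]
  by_cases h : i = j
  · subst h; rfl
  · rw [add_right_comm]
    simp [h, Ne.symm h]
    ring

/-- The Heisenberg relation `[h(m), h(n)] = m δ_{m+n,0}`. -/
lemma hOp_comm (m n : ℤ) (p : SS) :
    hOp m (hOp n p) = hOp n (hOp m p) + (if m + n = 0 then (m : ℂ) else 0) • p := by
  rcases int_trichotomy m with rfl | ⟨i, rfl⟩ | ⟨i, rfl⟩
  · simp [hOp_zero]
  · rcases int_trichotomy n with rfl | ⟨j, rfl⟩ | ⟨j, rfl⟩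
    · simp [hOp_zero]
    · have : ¬ (((i : ℕ) : ℤ) + ((j : ℕ) : ℤ) = 0) := by have := i.pos; omega
      simp [hOp_pos, this, pderiv_pderiv_comm i j, smul_comm ((i : ℕ) : ℂ)]
    · by_cases h : i = j
      · subst h
        simp [hOp_pos, hOp_neg, smul_add, add_comm]
      · have : ¬ (((i : ℕ) : ℤ) + -((j : ℕ) : ℤ) = 0) := by
          intro h'; apply h; apply PNat.eq; omega
        simp [hOp_pos, hOp_neg, this,
          MvPolynomial.pderiv_X_of_ne (Ne.symm h)]
  · rcases int_trichotomy n with rfl | ⟨j, rfl⟩ | ⟨j, rfl⟩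
    · simp [hOp_zero]
    · by_cases h : i = j
      · subst h
        simp [hOp_pos, hOp_neg, smul_add]
      · have : ¬ (-((i : ℕ) : ℤ) + ((j : ℕ) : ℤ) = 0) := by
          intro h'; apply h; apply PNat.eq; omega
        simp [hOp_pos, hOp_neg, this,
          MvPolynomial.pderiv_X_of_ne h]
    · have : ¬ (-((i : ℕ) : ℤ) + -((j : ℕ) : ℤ) = 0) := by have := i.pos; omega
      simp only [hOp_neg, this, if_false, zero_smul, add_zero]
      ring

lemma hOp_eventually_zero (p : SS) : ∃ N : ℤ, ∀ m : ℤ, N < m → hOp m p = 0 := by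
  obtain ⟨N, hN⟩ : ∃ N : ℕ, ∀ i ∈ p.vars, (i : ℕ) ≤ N :=
    ⟨p.vars.sup (fun i => (i : ℕ)), fun i hi => Finset.le_sup (f := fun i : ℕ+ => (i : ℕ)) hi⟩
  refine ⟨N, fun m hm => ?_⟩
  rcases int_trichotomy m with rfl | ⟨i, rfl⟩ | ⟨i, rfl⟩
  · simp [hOp_zero]
  · rw [hOp_pos, MvPolynomial.pderiv_eq_zero_of_notMem_vars, smul_zero]
    intro hi
    have := hN i hi
    omega
  · omega

lemma nord_finite_support (c : ℤ → ℂ) (n : ℤ) (p : SS) :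
    (Function.support fun j : ℤ => c j • nord j (n - j) p).Finite := by
  obtain ⟨N, hN⟩ := hOp_eventually_zero p
  refine (Set.finite_Icc (n - N) N).subset fun j hj => ?_
  by_contra hcon
  apply hj
  have h : N < j ∨ N < n - j := by
    by_contra h'
    apply hcon
    constructor <;> omega
  have : nord j (n - j) p = 0 := by
    unfold nord
    split_ifs with hle
    · rw [Module.End.mul_apply, hN (n - j) (by omega), map_zero]
    · rw [Module.End.mul_apply, hN j (by omega), map_zero]
  simp [this]

lemma nord_comm (i j k : ℤ) (p : SS) :
    nord i j (hOp k p) - hOp k (nord i j p)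
      = (if i = -k then (i : ℂ) else 0) • hOp j p
        + (if j = -k then (j : ℂ) else 0) • hOp i p := by
  have key : ∀ a b : ℤ, hOp a (hOp b (hOp k p)) - hOp k (hOp a (hOp b p))
      = (if a = -k then (a : ℂ) else 0) • hOp b p
        + (if b = -k then (b : ℂ) else 0) • hOp a p := by
    intro a b
    rw [hOp_comm b k p, map_add, map_smul, hOp_comm a k (hOp b p)]
    simp only [eq_neg_iff_add_eq_zero]
    abel
  unfold nord
  by_cases h : i ≤ j
  · rw [if_pos h]
    exact key i j
  · rw [if_neg h, Module.End.mul_apply, Module.End.mul_apply, key j i, add_comm]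

/-- The commutator of `L⁽ʳ⁾(n)` with `h(k)` is a multiple of `h(n+k)`; the multiple is
exactly the coefficient by which `(-1)^(r+1) Dʳ tⁿ D Dʳ` sends `tᵏ` to `tⁿ⁺ᵏ`. -/
lemma LR_comm (L : Module.End ℂ SS) (r : ℕ) (n : ℤ)
    (hL : ∀ p : SS, L p = (1 / 2 : ℂ) •
      ∑ᶠ j : ℤ, ((j : ℂ) ^ r * ((n : ℂ) - (j : ℂ)) ^ r) • nord j (n - j) p)
    (k : ℤ) :
    L * hOp k - hOp k * L
      = ((-1 : ℂ) ^ (r + 1) * ((k : ℂ) ^ (r + 1) * ((n : ℂ) + k) ^ r)) • hOp (n + k) := by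
  refine LinearMap.ext fun p => ?_
  have hfin := fun q => nord_finite_support (fun j => (j : ℂ) ^ r * ((n : ℂ) - (j : ℂ)) ^ r) n q
  have hmap : hOp k (∑ᶠ j : ℤ, ((j : ℂ) ^ r * ((n : ℂ) - (j : ℂ)) ^ r) • nord j (n - j) p)
      = ∑ᶠ j : ℤ, hOp k (((j : ℂ) ^ r * ((n : ℂ) - (j : ℂ)) ^ r) • nord j (n - j) p) :=
    (hOp k).toAddMonoidHom.map_finsum (hfin p)
  have hfin2 : (Function.support fun j : ℤ =>
      hOp k (((j : ℂ) ^ r * ((n : ℂ) - (j : ℂ)) ^ r) • nord j (n - j) p)).Finite :=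
    (hfin p).subset fun j hj h0 => hj (by
      simp only at h0
      simp only [h0, map_zero])
  rw [LinearMap.sub_apply, Module.End.mul_apply, Module.End.mul_apply, hL, hL, map_smul,
    ← smul_sub, hmap, ← finsum_sub_distrib (hfin (hOp k p)) hfin2]
  simp only [map_smul, ← smul_sub, nord_comm]
  -- Only the indices `j = -k` and `j = n + k` contribute, with equal contributions.
  have hs : ∀ j : ℤ, ((j : ℂ) ^ r * ((n : ℂ) - j) ^ r) •
        ((if j = -k then (j : ℂ) else 0) • hOp (n - j) p
          + (if n - j = -k then ((n - j : ℤ) : ℂ) else 0) • hOp j p)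
      = (if j = -k then ((-1 : ℂ) ^ (r + 1) * ((k : ℂ) ^ (r + 1) * ((n : ℂ) + k) ^ r)) •
            hOp (n + k) p else 0)
        + (if j = n + k then ((-1 : ℂ) ^ (r + 1) * ((k : ℂ) ^ (r + 1) * ((n : ℂ) + k) ^ r)) •
            hOp (n + k) p else 0) := by
    intro j
    rw [smul_add]
    congr 1
    · split_ifs with h
      · subst h
        rw [smul_smul, sub_neg_eq_add]
        congr 1
        push_cast
        rw [neg_pow (k : ℂ) r]
        ring
      · simp
    · by_cases h : j = n + k
      · subst h
        rw [if_pos (by ring), if_pos rfl, smul_smul]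
        congr 1
        push_cast
        rw [show (n : ℂ) - (n + k) = -k by ring, neg_pow (k : ℂ) r]
        ring
      · rw [if_neg h, if_neg (by omega)]
        simp
  simp only [hs]
  rw [finsum_add_distrib, finsum_eq_single _ (-k), finsum_eq_single _ (n + k)]
  · simp only [if_true, LinearMap.smul_apply]
    rw [← two_smul ℂ, smul_smul]
    norm_num
  · intro j hj; simp [hj]
  · intro j hj; simp [hj]
  · exact (Set.finite_singleton (-k)).subset fun j hj => by
      by_contra h; exact hj (if_neg h)
  · exact (Set.finite_singleton (n + k)).subset fun j hj => by
      by_contra h; exact hj (if_neg h)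

/-- Schur's lemma for the Fock space: an operator commuting with all `h(k)` is a scalar. -/
lemma scalar_of_commute (w : Module.End ℂ SS) (hw : ∀ k, w * hOp k - hOp k * w = 0) :
    ∃ c : ℂ, w = c • (1 : Module.End ℂ SS) := by
  have hw' : ∀ k p, w (hOp k p) = hOp k (w p) := fun k p => by
    have := congrArg (fun g : Module.End ℂ SS => g p) (hw k)
    simpa [sub_eq_zero] using this
  have hX : ∀ i p, w (MvPolynomial.X i * p) = MvPolynomial.X i * w p := fun i p => by
    rw [← hOp_neg, hw', hOp_neg]
  have hpd : ∀ i, MvPolynomial.pderiv i (w 1) = 0 := fun i => by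
    have h := hw' ((i : ℕ) : ℤ) 1
    rw [hOp_pos, hOp_pos] at h
    simpa using h.symm
  have hconst : w 1 = MvPolynomial.C (MvPolynomial.coeff 0 (w 1)) := by
    ext m
    rw [MvPolynomial.coeff_C]
    split_ifs with h
    · rw [h]
    · obtain ⟨i, hi⟩ : ∃ i, m i ≠ 0 := by
        by_contra hcon
        push Not at hcon
        exact h (Finsupp.ext hcon).symm
      have h1 := congrArg (MvPolynomial.coeff (m - Finsupp.single i 1)) (hpd i)
      have h2 : m - Finsupp.single i 1 + Finsupp.single i 1 = m :=
        tsub_add_cancel_of_le (by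
          rw [Finsupp.single_le_iff]; omega)
      rw [MvPolynomial.coeff_pderiv, h2, MvPolynomial.coeff_zero] at h1
      refine (mul_eq_zero.mp h1).resolve_right ?_
      exact Nat.cast_add_one_ne_zero _
  refine ⟨MvPolynomial.coeff 0 (w 1), LinearMap.ext fun p => ?_⟩
  rw [LinearMap.smul_apply, Module.End.one_apply]
  induction p using MvPolynomial.induction_on with
  | C a =>
    have : (MvPolynomial.C a : SS) = a • 1 := by
      rw [MvPolynomial.smul_eq_C_mul, mul_one]
    rw [this, map_smul, hconst, MvPolynomial.smul_eq_C_mul, MvPolynomial.smul_eq_C_mul,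
      MvPolynomial.smul_eq_C_mul]
    simp [mul_comm]
  | add p q hp hq => rw [map_add, hp, hq, smul_add]
  | mul_X p i hp => rw [mul_comm, hX, hp, mul_smul_comm]

lemma laurent_hom_ext {M : Type*} [AddCommGroup M] [Module ℂ M]
    {A B : LaurentPolynomial ℂ →ₗ[ℂ] M} (h : ∀ k : ℤ, A (T k) = B (T k)) : A = B :=
  (AddMonoidAlgebra.basis ℤ ℂ).ext fun k => by
    rw [AddMonoidAlgebra.basis_apply]; exact h k

/-- The linear map `ℂ[t,t⁻¹] → End S` sending `tᵏ` to `h(k)`. -/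
def fock : LaurentPolynomial ℂ →ₗ[ℂ] Module.End ℂ SS :=
  (AddMonoidAlgebra.basis ℤ ℂ).constr ℂ hOp

lemma fock_T (k : ℤ) : fock (T k) = hOp k := by
  have := (AddMonoidAlgebra.basis ℤ ℂ).constr_basis ℂ hOp k
  rwa [AddMonoidAlgebra.basis_apply] at this

/-- Commutators with `h(-l)` read off the coefficients of `q` from `fock q`, except the one
at `l = 0`. -/
lemma fock_comm (q : LaurentPolynomial ℂ) (l : ℤ) :
    fock q * hOp (-l) - hOp (-l) * fock q = ((l : ℂ) * q.coeff l) • (1 : Module.End ℂ SS) := by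
  let A : LaurentPolynomial ℂ →ₗ[ℂ] Module.End ℂ SS :=
    (LinearMap.mulRight ℂ (hOp (-l)) - LinearMap.mulLeft ℂ (hOp (-l))) ∘ₗ fock
  let B : LaurentPolynomial ℂ →ₗ[ℂ] Module.End ℂ SS :=
    LinearMap.toSpanSingleton ℂ _ ((l : ℂ) • (1 : Module.End ℂ SS)) ∘ₗ
      Finsupp.lapply l ∘ₗ (AddMonoidAlgebra.coeffLinearEquiv ℂ).toLinearMap
  have hB : ∀ q, B q = ((l : ℂ) * q.coeff l) • (1 : Module.End ℂ SS) := fun q => by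
    rw [mul_comm, mul_smul]
    rfl
  have hAB : A = B := laurent_hom_ext fun k => by
    rw [hB, LaurentPolynomial.T_apply]
    refine LinearMap.ext fun p => ?_
    simp only [A, LinearMap.comp_apply, LinearMap.sub_apply, LinearMap.mulRight_apply,
      LinearMap.mulLeft_apply, fock_T, Module.End.mul_apply, LinearMap.smul_apply,
      Module.End.one_apply]
    rw [hOp_comm k (-l) p, add_sub_cancel_left]
    by_cases h : k = l
    · subst h; simp
    · have : ¬ (k + -l = 0) := by omega
      simp [h, this]
  rw [← hB, ← hAB]
  rfl

/-! ### The Lie algebra of the operators `Dʳ tⁿ D Dʳ` -/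

/-- The operator `(-1)^(r+1) Dʳ tⁿ D Dʳ`. -/
def rho (D : Module.End ℂ (LaurentPolynomial ℂ)) (r : ℕ) (n : ℤ) :
    Module.End ℂ (LaurentPolynomial ℂ) :=
  ((-1 : ℂ) ^ (r + 1)) • (D ^ r * (LinearMap.mulLeft ℂ (T n) * D) * D ^ r)

/-- The operator `tⁿ p(D) D`, for a polynomial `p`. -/
def polyOp (D : Module.End ℂ (LaurentPolynomial ℂ)) (n : ℤ) :
    Polynomial ℂ →ₗ[ℂ] Module.End ℂ (LaurentPolynomial ℂ) :=
  LinearMap.mulLeft ℂ (LinearMap.mulLeft ℂ (T n)) ∘ₗ LinearMap.mulRight ℂ D ∘ₗ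
    (Polynomial.aeval D).toLinearMap

lemma D_pow_T {D : Module.End ℂ (LaurentPolynomial ℂ)}
    (hD : ∀ k : ℤ, D (T k) = (k : ℂ) • T k) (r : ℕ) (k : ℤ) : (D ^ r) (T k) = ((k : ℂ) ^ r) • T k := by
  induction r with
  | zero => simp
  | succ r ih => rw [pow_succ, Module.End.mul_apply, hD, map_smul, ih, smul_smul, pow_succ']

lemma rho_T {D : Module.End ℂ (LaurentPolynomial ℂ)}
    (hD : ∀ k : ℤ, D (T k) = (k : ℂ) • T k) (r : ℕ) (n k : ℤ) :
    rho D r n (T k)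
      = ((-1 : ℂ) ^ (r + 1) * ((k : ℂ) ^ (r + 1) * ((n : ℂ) + k) ^ r)) • T (n + k) := by
  simp only [rho, LinearMap.smul_apply, Module.End.mul_apply, D_pow_T hD, map_smul, hD,
    LinearMap.mulLeft_apply, ← LaurentPolynomial.T_add, smul_smul]
  congr 1
  push_cast
  ring

lemma polyOp_T {D : Module.End ℂ (LaurentPolynomial ℂ)}
    (hD : ∀ k : ℤ, D (T k) = (k : ℂ) • T k) (n : ℤ) (p : Polynomial ℂ) (k : ℤ) :
    polyOp D n p (T k) = (p.eval (k : ℂ) * k) • T (n + k) := by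
  change T n * (Polynomial.aeval D p) (D (T k)) = _
  rw [hD, map_smul, Module.End.aeval_apply_of_mem_apply_eq_smul (hD k), smul_smul,
    mul_smul_comm, ← LaurentPolynomial.T_add, mul_comm]

/-- With `u = X (X + n)`, the polynomials `X` and `-n - X` are the two roots of
`Y² + n Y - u`, so their power sums are polynomials in `u`. -/
lemma symm_pow_mem (n : ℂ) (m : ℕ) :
    (Polynomial.X ^ m + (-Polynomial.C n - Polynomial.X) ^ m : Polynomial ℂ)
      ∈ Submodule.span ℂ (Set.range fun r : ℕ =>
          (Polynomial.X * (Polynomial.X + Polynomial.C n)) ^ r) := by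
  set u : Polynomial ℂ := Polynomial.X * (Polynomial.X + Polynomial.C n) with hu
  set V := Submodule.span ℂ (Set.range fun r : ℕ => u ^ r) with hV
  have hone : (1 : Polynomial ℂ) ∈ V := Submodule.subset_span ⟨0, pow_zero u⟩
  have hmul : ∀ q ∈ V, u * q ∈ V := by
    intro q hq
    induction hq using Submodule.span_induction with
    | mem x hx =>
      obtain ⟨r, rfl⟩ := hx
      exact Submodule.subset_span ⟨r + 1, pow_succ' u r⟩
    | zero => simp
    | add x y _ _ hx hy => rw [mul_add]; exact V.add_mem hx hy
    | smul a x _ hx => rw [mul_smul_comm]; exact V.smul_mem a hx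
  induction m using Nat.twoStepInduction with
  | zero =>
    convert V.smul_mem (2 : ℂ) hone using 1
    rw [pow_zero, pow_zero, two_smul]
  | one =>
    convert V.smul_mem (-n) hone using 1
    rw [Polynomial.smul_eq_C_mul, Polynomial.C_neg]
    ring
  | more m h0 h1 =>
    convert V.add_mem (V.smul_mem (-n) h1) (hmul _ h0) using 1
    rw [Polynomial.smul_eq_C_mul, Polynomial.C_neg, hu]
    ring

/-- A polynomial invariant under `X ↦ -n - X` is a polynomial in `X (X + n)`. -/
lemma symm_mem (n : ℂ) (p : Polynomial ℂ)
    (hp : p.comp (-Polynomial.C n - Polynomial.X) = p) :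
    p ∈ Submodule.span ℂ (Set.range fun r : ℕ =>
          (Polynomial.X * (Polynomial.X + Polynomial.C n)) ^ r) := by
  have h : ∀ q : Polynomial ℂ, q + q.comp (-Polynomial.C n - Polynomial.X) ∈
      Submodule.span ℂ (Set.range fun r : ℕ =>
          (Polynomial.X * (Polynomial.X + Polynomial.C n)) ^ r) := by
    intro q
    induction q using Polynomial.induction_on' with
    | add p q hp hq =>
      rw [Polynomial.add_comp, add_add_add_comm]
      exact Submodule.add_mem _ hp hq
    | monomial m a =>
      rw [← Polynomial.C_mul_X_pow_eq_monomial, Polynomial.C_mul_comp, Polynomial.X_pow_comp,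
        ← mul_add, ← Polynomial.smul_eq_C_mul]
      exact Submodule.smul_mem _ a (symm_pow_mem n m)
  have h2 := Submodule.smul_mem _ (1 / 2 : ℂ) (h p)
  rw [hp, ← two_smul ℂ p, smul_smul] at h2
  norm_num at h2
  exact h2

lemma polyOp_mem {D : Module.End ℂ (LaurentPolynomial ℂ)}
    (hD : ∀ k : ℤ, D (T k) = (k : ℂ) • T k) (n : ℤ) (p : Polynomial ℂ)
    (hp : p.comp (-Polynomial.C (n : ℂ) - Polynomial.X) = p) :
    polyOp D n p ∈ Submodule.span ℂ (Set.range fun a : ℕ × ℤ => rho D a.1 a.2) := by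
  suffices h : Submodule.span ℂ (Set.range fun r : ℕ =>
      (Polynomial.X * (Polynomial.X + Polynomial.C (n : ℂ))) ^ r) ≤
      (Submodule.span ℂ (Set.range fun a : ℕ × ℤ => rho D a.1 a.2)).comap (polyOp D n) from
    h (symm_mem n p hp)
  rw [Submodule.span_le]
  rintro _ ⟨r, rfl⟩
  have e : polyOp D n ((Polynomial.X * (Polynomial.X + Polynomial.C (n : ℂ))) ^ r)
      = ((-1 : ℂ) ^ (r + 1)) • rho D r n := laurent_hom_ext fun k => by
    rw [polyOp_T hD, LinearMap.smul_apply, rho_T hD, smul_smul, ← mul_assoc, ← mul_pow]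
    congr 1
    simp only [Polynomial.eval_pow, Polynomial.eval_mul, Polynomial.eval_X, Polynomial.eval_add,
      Polynomial.eval_C, mul_neg, mul_one, neg_neg, one_pow, one_mul, mul_pow]
    ring
  rw [SetLike.mem_coe, Submodule.mem_comap, e]
  exact Submodule.smul_mem _ _ (Submodule.subset_span ⟨(r, n), rfl⟩)

/-- `(-1)^(r+1) Dʳ tⁿ D Dʳ` is `tⁿ p(D) D` with `p = (-1)^(r+1) (X (X + n))ʳ`. -/
lemma rho_eq_polyOp {D : Module.End ℂ (LaurentPolynomial ℂ)}
    (hD : ∀ k : ℤ, D (T k) = (k : ℂ) • T k) (r : ℕ) (n : ℤ) :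
    ∃ p : Polynomial ℂ, p.comp (-Polynomial.C (n : ℂ) - Polynomial.X) = p ∧
      rho D r n = polyOp D n p := by
  refine ⟨Polynomial.C ((-1) ^ (r + 1)) *
    (Polynomial.X * (Polynomial.X + Polynomial.C (n : ℂ))) ^ r, ?_, ?_⟩
  · simp only [Polynomial.mul_comp, Polynomial.pow_comp, Polynomial.C_comp, Polynomial.X_comp,
      Polynomial.add_comp]
    congr 2
    ring
  · refine laurent_hom_ext fun k => ?_
    rw [polyOp_T hD, rho_T hD]
    congr 1
    simp only [Polynomial.eval_pow, Polynomial.eval_mul, Polynomial.eval_X, Polynomial.eval_add,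
      Polynomial.eval_C, mul_pow]
    ring

/-- The bracket of `t^m p(D) D` and `tⁿ q(D) D` with `p`, `q` symmetric is `t^(m+n) s(D) D`
with `s = q(X) p(X + n) (X + n) - p(X) q(X + m) (X + m)`, and the symmetry `X ↦ -(m+n) - X`
exchanges the two (signed) terms of `s`. -/
lemma rho_bracket_mem {D : Module.End ℂ (LaurentPolynomial ℂ)}
    (hD : ∀ k : ℤ, D (T k) = (k : ℂ) • T k) (r s : ℕ) (m n : ℤ) :
    rho D r m * rho D s n - rho D s n * rho D r m
      ∈ Submodule.span ℂ (Set.range fun a : ℕ × ℤ => rho D a.1 a.2) := by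
  obtain ⟨p, hp, ep⟩ := rho_eq_polyOp hD r m
  obtain ⟨q, hq, eq⟩ := rho_eq_polyOp hD s n
  have hpe : ∀ z : ℂ, p.eval (-m - z) = p.eval z := fun z => by
    conv_rhs => rw [← hp]
    simp [Polynomial.eval_comp]
  have hqe : ∀ z : ℂ, q.eval (-n - z) = q.eval z := fun z => by
    conv_rhs => rw [← hq]
    simp [Polynomial.eval_comp]
  rw [ep, eq]
  have e : polyOp D m p * polyOp D n q - polyOp D n q * polyOp D m p
      = polyOp D (m + n)
        (q * p.comp (Polynomial.X + Polynomial.C (n : ℂ)) * (Polynomial.X + Polynomial.C (n : ℂ))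
        - p * q.comp (Polynomial.X + Polynomial.C (m : ℂ)) *
          (Polynomial.X + Polynomial.C (m : ℂ))) := by
    refine laurent_hom_ext fun k => ?_
    simp only [LinearMap.sub_apply, Module.End.mul_apply, polyOp_T hD, map_smul, smul_smul]
    rw [show n + (m + k) = m + n + k by ring, show m + (n + k) = m + n + k by ring, ← sub_smul]
    congr 1
    simp only [Polynomial.eval_sub, Polynomial.eval_mul, Polynomial.eval_comp,
      Polynomial.eval_add, Polynomial.eval_X, Polynomial.eval_C]
    push_cast
    rw [add_comm (n : ℂ) k, add_comm (m : ℂ) k]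
    ring
  rw [e]
  refine polyOp_mem hD _ _ (Polynomial.funext fun z => ?_)
  simp only [Polynomial.eval_sub, Polynomial.eval_mul, Polynomial.eval_comp, Polynomial.eval_neg,
    Polynomial.eval_add, Polynomial.eval_X, Polynomial.eval_C]
  push_cast
  rw [show -((m : ℂ) + n) - z + n = -m - z by ring, show -((m : ℂ) + n) - z + m = -n - z by ring,
    hpe, hqe, show -((m : ℂ) + n) - z = -m - (z + n) by ring, hpe,
    show -(m : ℂ) - (z + n) = -n - (z + m) by ring, hqe]
  ring

/-! ### The graph of the projection -/

/-- The generators of the graph of the projection: `id ↦ 0` and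
`L⁽ʳ⁾(n) ↦ (-1)^(r+1) Dʳ tⁿ D Dʳ`, where `f` lists `id` and the operators `L⁽ʳ⁾(n)`. -/
def graphGen (f : Option (ℕ × ℤ) → Module.End ℂ SS) (D : Module.End ℂ (LaurentPolynomial ℂ)) :
    Option (ℕ × ℤ) → Module.End ℂ SS × Module.End ℂ (LaurentPolynomial ℂ)
  | none => (f none, 0)
  | some a => (f (some a), rho D a.1 a.2)

/-- The graph of the projection, as a subspace of `End S × End ℂ[t,t⁻¹]`. -/
def graphSpan (f : Option (ℕ × ℤ) → Module.End ℂ SS) (D : Module.End ℂ (LaurentPolynomial ℂ)) :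
    Submodule ℂ (Module.End ℂ SS × Module.End ℂ (LaurentPolynomial ℂ)) :=
  Submodule.span ℂ (Set.range (graphGen f D))

lemma graphSpan_map_fst (f : Option (ℕ × ℤ) → Module.End ℂ SS)
    (D : Module.End ℂ (LaurentPolynomial ℂ)) :
    (graphSpan f D).map (LinearMap.fst ℂ _ _) = Submodule.span ℂ (Set.range f) := by
  rw [graphSpan, Submodule.map_span, ← Set.range_comp]
  congr 2
  funext o
  cases o <;> rfl

lemma graphSpan_map_snd (f : Option (ℕ × ℤ) → Module.End ℂ SS)
    (D : Module.End ℂ (LaurentPolynomial ℂ)) :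
    (graphSpan f D).map (LinearMap.snd ℂ _ _)
      = Submodule.span ℂ (Set.range fun a : ℕ × ℤ => rho D a.1 a.2) := by
  rw [graphSpan, Submodule.map_span, ← Set.range_comp]
  apply le_antisymm
  · rw [Submodule.span_le]
    rintro _ ⟨o, rfl⟩
    cases o with
    | none => exact Submodule.zero_mem _
    | some a => exact Submodule.subset_span ⟨a, rfl⟩
  · rw [Submodule.span_le]
    rintro _ ⟨a, rfl⟩
    exact Submodule.subset_span ⟨some a, rfl⟩

lemma span_rho_bracket_mem {D : Module.End ℂ (LaurentPolynomial ℂ)}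
    (hD : ∀ k : ℤ, D (T k) = (k : ℂ) • T k) 
    {x y : Module.End ℂ (LaurentPolynomial ℂ)}
    (hx : x ∈ Submodule.span ℂ (Set.range fun a : ℕ × ℤ => rho D a.1 a.2))
    (hy : y ∈ Submodule.span ℂ (Set.range fun a : ℕ × ℤ => rho D a.1 a.2)) :
    x * y - y * x ∈ Submodule.span ℂ (Set.range fun a : ℕ × ℤ => rho D a.1 a.2) := by
  induction hx, hy using Submodule.span_induction₂ with
  | mem_mem x y hx hy =>
    obtain ⟨a, rfl⟩ := hx
    obtain ⟨b, rfl⟩ := hy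
    exact rho_bracket_mem hD _ _ _ _
  | zero_left y hy => simp
  | zero_right x hx => simp
  | add_left x y z _ _ _ h1 h2 =>
    rw [show (x + y) * z - z * (x + y) = (x * z - z * x) + (y * z - z * y) by noncomm_ring]
    exact Submodule.add_mem _ h1 h2
  | add_right x y z _ _ _ h1 h2 =>
    rw [show x * (y + z) - (y + z) * x = (x * y - y * x) + (x * z - z * x) by noncomm_ring]
    exact Submodule.add_mem _ h1 h2
  | smul_left c x y _ _ h =>
    rw [smul_mul_assoc, mul_smul_comm, ← smul_sub]
    exact Submodule.smul_mem _ _ h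
  | smul_right c x y _ _ h =>
    rw [smul_mul_assoc, mul_smul_comm, ← smul_sub]
    exact Submodule.smul_mem _ _ h

/-- The coefficient of `t^(n+k)` in `d tᵏ` depends polynomially on `k`, for `d` in the span
of the operators `Dʳ tⁿ D Dʳ`. -/
lemma coeff_polynomial {D : Module.End ℂ (LaurentPolynomial ℂ)}
    (hD : ∀ k : ℤ, D (T k) = (k : ℂ) • T k) 
    {d : Module.End ℂ (LaurentPolynomial ℂ)}
    (hd : d ∈ Submodule.span ℂ (Set.range fun a : ℕ × ℤ => rho D a.1 a.2)) (n : ℤ) :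
    ∃ P : Polynomial ℂ, ∀ k : ℤ, (d (T k)).coeff (n + k) = P.eval (k : ℂ) := by
  induction hd using Submodule.span_induction with
  | mem x hx =>
    obtain ⟨⟨r, m⟩, rfl⟩ := hx
    obtain ⟨p, -, e⟩ := rho_eq_polyOp hD r m
    by_cases h : m = n
    · subst h
      refine ⟨p * Polynomial.X, fun k => ?_⟩
      simp only [e, polyOp_T hD]
      simp
    · refine ⟨0, fun k => ?_⟩
      simp only [e, polyOp_T hD]
      simp [h]
  | zero => exact ⟨0, fun k => by simp⟩
  | add x y _ _ hx hy =>
    obtain ⟨P, hP⟩ := hx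
    obtain ⟨Q, hQ⟩ := hy
    exact ⟨P + Q, fun k => by simp [hP, hQ]⟩
  | smul a x _ hx =>
    obtain ⟨P, hP⟩ := hx
    exact ⟨Polynomial.C a * P, fun k => by simp [hP]⟩

/-- An element of the span of the `Dʳ tⁿ D Dʳ` with all values in `ℂ t⁰` vanishes: its
coefficient polynomials have infinitely many roots. -/
lemma eq_zero_of_coeff {D : Module.End ℂ (LaurentPolynomial ℂ)}
    (hD : ∀ k : ℤ, D (T k) = (k : ℂ) • T k) 
    {d : Module.End ℂ (LaurentPolynomial ℂ)}
    (hd : d ∈ Submodule.span ℂ (Set.range fun a : ℕ × ℤ => rho D a.1 a.2))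
    (h : ∀ k l : ℤ, l ≠ 0 → (d (T k)).coeff l = 0) : d = 0 := by
  refine laurent_hom_ext fun k => LaurentPolynomial.ext fun l => ?_
  obtain ⟨P, hP⟩ := coeff_polynomial hD hd (l - k)
  have hP0 : P = 0 := by
    refine Polynomial.eq_zero_of_infinite_isRoot P ?_
    have hinf : (((↑) : ℤ → ℂ) '' {-(l - k)}ᶜ).Infinite :=
      (Set.finite_singleton (-(l - k))).infinite_compl.image Int.cast_injective.injOn
    refine hinf.mono ?_
    rintro _ ⟨j, hj, rfl⟩
    rw [Set.mem_ofPred_eq, Polynomial.IsRoot, ← hP]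
    exact h _ _ fun h0 => hj (by rw [Set.mem_singleton_iff]; omega)
  have := hP k
  rw [hP0, sub_add_cancel] at this
  simpa using this

/-- The two components of an element of the graph are related by the adjoint action on the
Heisenberg operators. -/
lemma graph_intertwine {D : Module.End ℂ (LaurentPolynomial ℂ)}
    (hD : ∀ k : ℤ, D (T k) = (k : ℂ) • T k) 
    {f : Option (ℕ × ℤ) → Module.End ℂ SS} (hf0 : f none = 1)
    (hf : ∀ (r : ℕ) (n : ℤ) (p : SS), f (some (r, n)) p = (1 / 2 : ℂ) •
      ∑ᶠ j : ℤ, ((j : ℂ) ^ r * ((n : ℂ) - (j : ℂ)) ^ r) • nord j (n - j) p)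
    {x : Module.End ℂ SS × Module.End ℂ (LaurentPolynomial ℂ)} (hx : x ∈ graphSpan f D)
    (q : LaurentPolynomial ℂ) :
    x.1 * fock q - fock q * x.1 = fock (x.2 q) := by
  have hT : ∀ k : ℤ, x.1 * hOp k - hOp k * x.1 = fock (x.2 (T k)) := by
    intro k
    unfold graphSpan at hx
    induction hx using Submodule.span_induction with
    | mem x hx =>
      obtain ⟨o, rfl⟩ := hx
      rcases o with _ | ⟨r, n⟩
      · simp [graphGen, hf0]
      · simp only [graphGen]
        rw [LR_comm _ r n (hf r n) k, rho_T hD, map_smul, fock_T]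
    | zero => simp
    | add x y _ _ hx hy =>
      rw [Prod.fst_add, Prod.snd_add, LinearMap.add_apply, map_add, ← hx, ← hy]
      noncomm_ring
    | smul a x _ hx =>
      rw [Prod.smul_fst, Prod.smul_snd, LinearMap.smul_apply, map_smul, ← hx, smul_mul_assoc,
        mul_smul_comm]
      exact (smul_sub a _ _).symm
  have h : (LinearMap.mulLeft ℂ x.1 - LinearMap.mulRight ℂ x.1) ∘ₗ fock = fock ∘ₗ x.2 :=
    laurent_hom_ext fun k => by
      simpa [fock_T] using hT k
  exact LinearMap.congr_fun h q

lemma snd_mem_of_graph {f : Option (ℕ × ℤ) → Module.End ℂ SS}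
    {D : Module.End ℂ (LaurentPolynomial ℂ)}
    {x : Module.End ℂ SS × Module.End ℂ (LaurentPolynomial ℂ)} (hx : x ∈ graphSpan f D) :
    x.2 ∈ Submodule.span ℂ (Set.range fun a : ℕ × ℤ => rho D a.1 a.2) := by
  rw [← graphSpan_map_snd f D]
  exact ⟨x, hx, rfl⟩

lemma graph_snd_eq_zero_iff {D : Module.End ℂ (LaurentPolynomial ℂ)}
    (hD : ∀ k : ℤ, D (T k) = (k : ℂ) • T k) 
    {f : Option (ℕ × ℤ) → Module.End ℂ SS} (hf0 : f none = 1)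
    (hf : ∀ (r : ℕ) (n : ℤ) (p : SS), f (some (r, n)) p = (1 / 2 : ℂ) •
      ∑ᶠ j : ℤ, ((j : ℂ) ^ r * ((n : ℂ) - (j : ℂ)) ^ r) • nord j (n - j) p)
    {x : Module.End ℂ SS × Module.End ℂ (LaurentPolynomial ℂ)} (hx : x ∈ graphSpan f D) :
    x.2 = 0 ↔ ∃ c : ℂ, x.1 = c • (1 : Module.End ℂ SS) := by
  constructor
  · intro h
    refine scalar_of_commute _ fun k => ?_
    rw [← fock_T, graph_intertwine hD hf0 hf hx, h, LinearMap.zero_apply, map_zero]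
  · rintro ⟨c, hc⟩
    refine eq_zero_of_coeff hD (snd_mem_of_graph hx) fun k l hl => ?_
    have h0 : fock (x.2 (T k)) = 0 := by
      rw [← graph_intertwine hD hf0 hf hx, hc]
      simp
    have h1 := fock_comm (x.2 (T k)) l
    rw [h0, zero_mul, mul_zero, sub_zero] at h1
    have h2 := (smul_eq_zero.mp h1.symm).resolve_right one_ne_zero
    exact (mul_eq_zero.mp h2).resolve_left (Int.cast_ne_zero.mpr hl)

/-- The graph is a Lie subalgebra. The second components are closed under the bracket, and an
element of the graph over the bracket of the second components differs from the bracket of the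
first components by an operator commuting with all `h(k)`, that is, by a scalar. -/
lemma graph_bracket_mem {D : Module.End ℂ (LaurentPolynomial ℂ)}
    (hD : ∀ k : ℤ, D (T k) = (k : ℂ) • T k) 
    {f : Option (ℕ × ℤ) → Module.End ℂ SS} (hf0 : f none = 1)
    (hf : ∀ (r : ℕ) (n : ℤ) (p : SS), f (some (r, n)) p = (1 / 2 : ℂ) •
      ∑ᶠ j : ℤ, ((j : ℂ) ^ r * ((n : ℂ) - (j : ℂ)) ^ r) • nord j (n - j) p)
    {x y : Module.End ℂ SS × Module.End ℂ (LaurentPolynomial ℂ)}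
    (hx : x ∈ graphSpan f D) (hy : y ∈ graphSpan f D) :
    (x.1 * y.1 - y.1 * x.1, x.2 * y.2 - y.2 * x.2) ∈ graphSpan f D := by
  have h := span_rho_bracket_mem hD (snd_mem_of_graph hx) (snd_mem_of_graph hy)
  rw [← graphSpan_map_snd f D] at h
  obtain ⟨z, hz, hz2⟩ := h
  change z.2 = _ at hz2
  obtain ⟨c, hc⟩ : ∃ c : ℂ, x.1 * y.1 - y.1 * x.1 - z.1 = c • (1 : Module.End ℂ SS) := by
    refine scalar_of_commute _ fun k => ?_
    have ex := graph_intertwine hD hf0 hf hx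
    have ey := graph_intertwine hD hf0 hf hy
    have ez := graph_intertwine hD hf0 hf hz (T k)
    rw [hz2, LinearMap.sub_apply, Module.End.mul_apply, Module.End.mul_apply, map_sub, ← ex, ← ey,
      ← ey, ← ex, fock_T] at ez
    rw [sub_mul, mul_sub, sub_sub_sub_comm, ez]
    simp only [sub_mul, mul_sub, mul_assoc]
    abel
  have hone : ((1, 0) : Module.End ℂ SS × Module.End ℂ (LaurentPolynomial ℂ)) ∈ graphSpan f D :=
    Submodule.subset_span ⟨none, by rw [graphGen, hf0]⟩
  have e : (x.1 * y.1 - y.1 * x.1, x.2 * y.2 - y.2 * x.2)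
      = z + c • ((1, 0) : Module.End ℂ SS × Module.End ℂ (LaurentPolynomial ℂ)) := by
    refine Prod.ext ?_ ?_
    · simp [← hc]
    · simp [hz2]
  rw [e]
  exact Submodule.add_mem _ hz (Submodule.smul_mem _ _ hone)

/-- A single-valued subspace of `A × B` whose first projection contains `W` is, over `W`, the
graph of a linear map. -/
lemma exists_linearMap_of_graph {A B : Type*} [AddCommGroup A] [Module ℂ A] [AddCommGroup B]
    [Module ℂ B] {Γ : Submodule ℂ (A × B)} {W : Submodule ℂ A}
    (hex : ∀ w ∈ W, ∃ d, (w, d) ∈ Γ)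
    (huniq : ∀ w d d', (w, d) ∈ Γ → (w, d') ∈ Γ → d = d') :
    ∃ π : W →ₗ[ℂ] B, ∀ v : W, ((v : A), π v) ∈ Γ := by
  choose g hg using hex
  exact ⟨{ toFun := fun v => g v v.2
           map_add' := fun v w =>
            huniq _ _ _ (hg _ (v + w).2) (Γ.add_mem (hg v v.2) (hg w w.2))
           map_smul' := fun c v =>
            huniq _ _ _ (hg _ (c • v).2) (Γ.smul_mem c (hg v v.2)) },
    fun v => hg v v.2⟩

/-- The span `W` of `{L⁽ʳ⁾(n)} ∪ {id_S}` is a Lie subalgebra of `End_ℂ(S)`, and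
`π(L⁽ʳ⁾(n)) = (−1)^{r+1}·Dʳ∘M_{tⁿ}∘D∘Dʳ`, `π(id_S) = 0` defines a surjective Lie algebra
homomorphism of `W` onto `𝒟⁺` with kernel `ℂ·id_S`: `W` is a one-dimensional central
extension of `𝒟⁺`. -/
theorem W_is_central_extension_of_Dplus
    (LR : ℕ → ℤ → Module.End ℂ SS)
    (hLR : ∀ (r : ℕ) (n : ℤ) (p : SS), LR r n p
      = (1 / 2 : ℂ) •
          ∑ᶠ j : ℤ, ((j : ℂ) ^ r * ((n : ℂ) - (j : ℂ)) ^ r) • nord j (n - j) p)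
    (Dop : Module.End ℂ (LaurentPolynomial ℂ))
    (hD : ∀ k : ℤ, Dop (LaurentPolynomial.T k) = (k : ℂ) • LaurentPolynomial.T k)
    (f : Option (ℕ × ℤ) → Module.End ℂ SS)
    (hf0 : f none = 1) (hf : ∀ (r : ℕ) (n : ℤ), f (some (r, n)) = LR r n) :
    (∀ x ∈ Submodule.span ℂ (Set.range f), ∀ y ∈ Submodule.span ℂ (Set.range f),
        x * y - y * x ∈ Submodule.span ℂ (Set.range f)) ∧
    ∃ π : (Submodule.span ℂ (Set.range f)) →ₗ[ℂ] Module.End ℂ (LaurentPolynomial ℂ),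
      (∀ (r : ℕ) (n : ℤ) (hn : LR r n ∈ Submodule.span ℂ (Set.range f)),
          π ⟨LR r n, hn⟩
            = ((-1 : ℂ) ^ (r + 1)) •
                (Dop ^ r * (LinearMap.mulLeft ℂ (LaurentPolynomial.T n) * Dop) * Dop ^ r)) ∧
      (∀ h1 : (1 : Module.End ℂ SS) ∈ Submodule.span ℂ (Set.range f),
          π ⟨1, h1⟩ = 0) ∧
      (∀ (x y : Submodule.span ℂ (Set.range f))
          (hxy : ((x : Module.End ℂ SS) * y - (y : Module.End ℂ SS) * x)
              ∈ Submodule.span ℂ (Set.range f)),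
          π ⟨(x : Module.End ℂ SS) * y - (y : Module.End ℂ SS) * x, hxy⟩
            = π x * π y - π y * π x) ∧
      (∀ v : Submodule.span ℂ (Set.range f),
          π v = 0 ↔ ∃ c : ℂ, (v : Module.End ℂ SS) = c • (1 : Module.End ℂ SS)) ∧
      LinearMap.range π
        = Submodule.span ℂ
            {g : Module.End ℂ (LaurentPolynomial ℂ) | ∃ r : ℕ, ∃ n : ℤ,
              g = Dop ^ r * (LinearMap.mulLeft ℂ (LaurentPolynomial.T n) * Dop) * Dop ^ r} := by
  have hL : ∀ (r : ℕ) (n : ℤ) (p : SS), f (some (r, n)) p = (1 / 2 : ℂ) •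
      ∑ᶠ j : ℤ, ((j : ℂ) ^ r * ((n : ℂ) - (j : ℂ)) ^ r) • nord j (n - j) p := fun r n p => by
    rw [hf, hLR]
  have hzero {x : Module.End ℂ SS × Module.End ℂ (LaurentPolynomial ℂ)}
      (hx : x ∈ graphSpan f Dop) := graph_snd_eq_zero_iff hD hf0 hL hx
  have hbr {x y : Module.End ℂ SS × Module.End ℂ (LaurentPolynomial ℂ)}
      (hx : x ∈ graphSpan f Dop) (hy : y ∈ graphSpan f Dop) :=
    graph_bracket_mem hD hf0 hL hx hy
  have hfst {x : Module.End ℂ SS × Module.End ℂ (LaurentPolynomial ℂ)}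
      (hx : x ∈ graphSpan f Dop) : x.1 ∈ Submodule.span ℂ (Set.range f) := by
    rw [← graphSpan_map_fst f Dop]
    exact ⟨x, hx, rfl⟩
  have hex : ∀ w ∈ Submodule.span ℂ (Set.range f), ∃ d, (w, d) ∈ graphSpan f Dop := by
    intro w hw
    rw [← graphSpan_map_fst f Dop] at hw
    obtain ⟨⟨w', d⟩, hx, rfl⟩ := hw
    exact ⟨d, hx⟩
  have huniq : ∀ w d d', (w, d) ∈ graphSpan f Dop → (w, d') ∈ graphSpan f Dop → d = d' := by
    intro w d d' h h'
    have h2 := Submodule.sub_mem _ h h'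
    exact sub_eq_zero.mp ((hzero h2).mpr ⟨0, by simp⟩)
  obtain ⟨π, hπ⟩ := exists_linearMap_of_graph hex huniq
  have hπu : ∀ (v : Submodule.span ℂ (Set.range f)) (d : Module.End ℂ (LaurentPolynomial ℂ)),
      ((v : Module.End ℂ SS), d) ∈ graphSpan f Dop → π v = d := fun v d h =>
    huniq v (π v) d (hπ v) h
  refine ⟨fun x hx y hy => hfst (hbr (hπ ⟨x, hx⟩) (hπ ⟨y, hy⟩)), π, ?_, ?_, ?_, ?_, ?_⟩
  · intro r n hn
    refine hπu _ _ (Submodule.subset_span ⟨some (r, n), ?_⟩)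
    rw [graphGen, hf]
    rfl
  · intro h1
    refine hπu _ _ (Submodule.subset_span ⟨none, ?_⟩)
    rw [graphGen, hf0]
  · intro x y hxy
    have h := hbr (hπ x) (hπ y)
    dsimp only at h
    exact hπu ⟨_, hxy⟩ _ h
  · intro v
    exact hzero (hπ v)
  · have hrange : LinearMap.range π
        = Submodule.span ℂ (Set.range fun a : ℕ × ℤ => rho Dop a.1 a.2) := by
      rw [← graphSpan_map_snd f Dop]
      ext d
      constructor
      · rintro ⟨v, rfl⟩
        exact ⟨_, hπ v, rfl⟩
      · rintro ⟨x, hx, rfl⟩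
        exact ⟨⟨x.1, hfst hx⟩, hπu ⟨x.1, hfst hx⟩ x.2 hx⟩
    rw [hrange]
    apply le_antisymm
    · rw [Submodule.span_le]
      rintro _ ⟨⟨r, n⟩, rfl⟩
      exact Submodule.smul_mem _ _ (Submodule.subset_span ⟨r, n, rfl⟩)
    · rw [Submodule.span_le]
      rintro _ ⟨r, n, rfl⟩
      have h := Submodule.smul_mem _ ((-1 : ℂ) ^ (r + 1)) (Submodule.subset_span (R := ℂ)
        (s := Set.range fun a : ℕ × ℤ => rho Dop a.1 a.2) ⟨(r, n), rfl⟩)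
      have e : ((-1 : ℂ) ^ (r + 1)) • rho Dop r n
          = Dop ^ r * (LinearMap.mulLeft ℂ (T n) * Dop) * Dop ^ r := by
        rw [rho, smul_smul, ← mul_pow]
        simp
      rw [← e]
      exact h
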